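/- For integers 0 ≤ r ≤ m, the treewidth of the binary Reed–Muller code RM(r,m) equals its trelliswidth: κ(r,m) = τ(r,m) = Σ_{j=0}^{r} C(m−2j−1, r−j) if m ≥ 2r+1, and κ(r,m) = τ(r,m) = 1 + Σ_{j=0}^{m−r−1} C(m−2j−1, r−j) if m < 2r+1. -/

import Mathlib

open Module

/-- The submodule of vectors supported on `J` (i.e. zero outside `J`). -/
def supportedOn (F : Type) [Field F] {n : ℕ} (J : Set (Fin n)) : Submodule F (Fin n → F) :=
  Submodule.pi Jᶜ fun _ => ⊥

/-- Dimension of the shortening `C_J` of the code `C` to the coordinates in `J`. -/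
noncomputable def shortDim {F : Type} [Field F] {n : ℕ}
    (C : Submodule F (Fin n → F)) (J : Set (Fin n)) : ℕ :=
  finrank F ↥(C ⊓ supportedOn F J)

/-- Trelliswidth: the least branch complexity of any trellis realization of `C`,
minimized over all orderings (bijections from positions to coordinates) of `C`. -/
noncomputable def trellisWidth {F : Type} [Field F] {n : ℕ}
    (C : Submodule F (Fin n → F)) : ℕ :=
  sInf {t : ℕ | ∃ π : Equiv.Perm (Fin n),
    t = Finset.univ.sup fun i : Fin n =>
      finrank F ↥C - shortDim C (⇑π '' {j | j < i}) - shortDim C (⇑π '' {j | i < j})}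

/-- Degree of a vertex (the number of its neighbours). -/
noncomputable def deg {V : Type} (T : SimpleGraph V) (v : V) : ℕ :=
  (T.neighborSet v).ncard

/-- The set of leaves (degree-1 vertices) of a graph. -/
def leaves {V : Type} (T : SimpleGraph V) : Set V :=
  {v | deg T v = 1}

/-- A cubic tree: every node is a leaf (degree 1) or internal of degree 3. -/
def IsCubic {V : Type} (T : SimpleGraph V) : Prop :=
  ∀ v, deg T v = 1 ∨ deg T v = 3

/-- `compAway T v u` : the vertex set of the component of `T` minus the edge `{v,u}`
containing `u` (hence not containing `v`); this is `T_{e,v}` for `e = {u,v}`. -/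
def compAway {V : Type} (T : SimpleGraph V) (v u : V) : Set V :=
  {w | (T.deleteEdges {s(v, u)}).Reachable u w}

/-- `nAway T v u` : the number of leaves of `T` lying in the component of `T - {v,u}`
not containing `v`; this is `n_{e,v}` for `e = {u,v}`. -/
noncomputable def nAway {V : Type} (T : SimpleGraph V) (v u : V) : ℕ :=
  (compAway T v u ∩ leaves T).ncard

/-- Neighbours of a vertex, as a `Finset`. -/
noncomputable def nbrFinset {V : Type} [Fintype V] (T : SimpleGraph V) (v : V) : Finset V :=
  (T.neighborSet v).toFinite.toFinset

/-- `κ_v`: local constraint-code dimension at node `v` of the minimal realization of `C`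
on the tree decomposition `(T, ω)`. -/
noncomputable def kappaNode {F : Type} [Field F] {n : ℕ} (C : Submodule F (Fin n → F))
    {V : Type} [Fintype V] (T : SimpleGraph V) (ω : Fin n → V) (v : V) : ℕ :=
  finrank F ↥C - ∑ u ∈ nbrFinset T v, shortDim C (ω ⁻¹' compAway T v u)

/-- Constraint complexity `κ(C; T, ω)` of the minimal realization of `C` on `(T, ω)`. -/
noncomputable def constraintComplexity {F : Type} [Field F] {n : ℕ}
    (C : Submodule F (Fin n → F)) {V : Type} [Fintype V]
    (T : SimpleGraph V) (ω : Fin n → V) : ℕ :=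
  Finset.univ.sup (kappaNode C T ω)

/-- Treewidth of a code: the least constraint complexity of any of its tree
decompositions `(T, ω)` with `T` a finite tree. -/
noncomputable def treeWidth {F : Type} [Field F] {n : ℕ}
    (C : Submodule F (Fin n → F)) : ℕ :=
  sInf {t : ℕ | ∃ (N : ℕ) (T : SimpleGraph (Fin N)) (ω : Fin n → Fin N),
    T.IsTree ∧ t = constraintComplexity C T ω}

/-- The binary Reed–Muller code `RM(r,m)`: the evaluation vectors, at the points of
`{0,1}^m` listed in the standard bit order, of the `m`-variable polynomials over `F₂`
of total degree at most `r`. -/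
def RMcode (r m : ℕ) : Submodule (ZMod 2) (Fin (2 ^ m) → ZMod 2) :=
  Submodule.span (ZMod 2)
    {w | ∃ f : MvPolynomial (Fin m) (ZMod 2), f.totalDegree ≤ r ∧
      w = fun i => MvPolynomial.eval (fun j : Fin m => if Nat.testBit i.val j.val then 1 else 0) f}

/-- The claimed value `τ(r,m)` of the trelliswidth of `RM(r,m)`. -/
def tauRM (r m : ℕ) : ℕ :=
  if 2 * r + 1 ≤ m then ∑ j ∈ Finset.range (r + 1), Nat.choose (m - (2 * j + 1)) (r - j)
  else 1 + ∑ j ∈ Finset.range (m - r), Nat.choose (m - (2 * j + 1)) (r - j)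

/-!
The shortening of `RM(r,m)` to `s` coordinates has dimension at most the number of `j < s` with at
least `m - r` ones in binary, and the first `s` and the last `s` coordinates attain this bound: the
`(u | u + v)` construction of `RM(r,m)` splits a set of coordinates by the lowest bit of the index,
and counting heavy numbers obeys the same recursion. With the coordinates in their standard order,
the bound on the trelliswidth becomes an inequality on heavy counts. For the lower bound, every tree
decomposition has a vertex all of whose branches but one carry at most `2 ^ m / 3` coordinates while
the last one carries less than `2 ^ m - 2 ^ m / 3`. As heavy counts are superadditive, the branches
can be merged into three, and it remains to show that for such sizes `a`, `b`, `c` the heavy counts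
of the parts sum to at most that of `2 ^ m` minus `τ(r,m)`. Both inequalities follow by induction on
`m`, halving the sizes, from Pascal's rule `τ(r+1,m+1) + [m < 2r+1] = τ(r+1,m) + τ(r,m)`; the
bracket is the slack that absorbs a carry. Finally a path is a tree, so the treewidth is at most the
trelliswidth.
-/

/-! ### Binary weights -/

/-- The number of ones in the binary expansion of `n`. -/
def bitWeight (n : ℕ) : ℕ :=
  n.bitIndices.length

@[simp]
theorem bitWeight_zero : bitWeight 0 = 0 := by
  simp [bitWeight]

@[simp]
theorem bitWeight_two_mul (n : ℕ) : bitWeight (2 * n) = bitWeight n := by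
  simp [bitWeight]

@[simp]
theorem bitWeight_two_mul_add_one (n : ℕ) : bitWeight (2 * n + 1) = bitWeight n + 1 := by
  simp [bitWeight]

theorem bitWeight_succ_le (n : ℕ) : bitWeight (n + 1) ≤ bitWeight n + 1 := by
  induction n using Nat.strong_induction_on with
  | _ n ih =>
    obtain ⟨k, rfl | rfl⟩ := n.even_or_odd'
    · simp
    · rw [show 2 * k + 1 + 1 = 2 * (k + 1) by ring, bitWeight_two_mul, bitWeight_two_mul_add_one]
      exact (ih k (by omega)).trans (Nat.le_succ _)

theorem bitWeight_pos {n : ℕ} (hn : 0 < n) : 0 < bitWeight n := by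
  induction n using Nat.strong_induction_on with
  | _ n ih =>
    obtain ⟨k, rfl | rfl⟩ := n.even_or_odd'
    · simpa using ih k (by omega) (by omega)
    · simp

theorem bitWeight_add_bitWeight_of_add_add_one_eq_two_pow {m a b : ℕ} (h : a + b + 1 = 2 ^ m) :
    bitWeight a + bitWeight b = m := by
  induction m generalizing a b with
  | zero =>
    obtain ⟨rfl, rfl⟩ : a = 0 ∧ b = 0 := by rw [pow_zero] at h; omega
    simp
  | succ m ih =>
    rw [pow_succ] at h
    obtain ⟨x, rfl | rfl⟩ := a.even_or_odd' <;> obtain ⟨y, rfl | rfl⟩ := b.even_or_odd'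
    · omega
    · have := ih (a := x) (b := y) (by omega)
      simp only [bitWeight_two_mul, bitWeight_two_mul_add_one]
      omega
    · have := ih (a := x) (b := y) (by omega)
      simp only [bitWeight_two_mul, bitWeight_two_mul_add_one]
      omega
    · omega

theorem two_mul_bitWeight_add_of_three_mul_add_eq_two_pow {m x e : ℕ} (he : e ≤ 1)
    (h : 3 * x + 1 + e = 2 ^ m) : 2 * bitWeight x + e = m := by
  induction m generalizing x e with
  | zero =>
    obtain ⟨rfl, rfl⟩ : x = 0 ∧ e = 0 := by rw [pow_zero] at h; omega
    simp
  | succ m ih =>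
    rw [pow_succ] at h
    obtain rfl | rfl : e = 0 ∨ e = 1 := by omega
    · obtain ⟨y, rfl⟩ : ∃ y, x = 2 * y + 1 := ⟨x / 2, by omega⟩
      have := ih (x := y) le_rfl (by omega)
      rw [bitWeight_two_mul_add_one]
      omega
    · obtain ⟨y, rfl⟩ : ∃ y, x = 2 * y := ⟨x / 2, by omega⟩
      have := ih (x := y) zero_le_one (by omega)
      rw [bitWeight_two_mul]
      omega

/-- The number of naturals below `s` with at least `d` ones in their binary expansion. The number
`heavyCount (m - r) (2 ^ m)` is the dimension of `RM(r,m)`, and `heavyCount (m - r) s` is the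
largest dimension of a shortening of `RM(r,m)` to `s` coordinates. -/
def heavyCount (d s : ℕ) : ℕ :=
  Nat.count (fun j => d ≤ bitWeight j) s

@[simp]
theorem heavyCount_zero_right (d : ℕ) : heavyCount d 0 = 0 :=
  Nat.count_zero _

theorem heavyCount_succ (d s : ℕ) :
    heavyCount d (s + 1) = heavyCount d s + if d ≤ bitWeight s then 1 else 0 :=
  Nat.count_succ _ _

theorem heavyCount_mono (d : ℕ) : Monotone (heavyCount d) :=
  Nat.count_monotone _

theorem heavyCount_anti {d d' : ℕ} (h : d ≤ d') (s : ℕ) : heavyCount d' s ≤ heavyCount d s :=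
  Nat.count_mono_left fun _ _ => h.trans

@[simp]
theorem heavyCount_zero_left (s : ℕ) : heavyCount 0 s = s := by
  simp [heavyCount]

theorem heavyCount_one_left (s : ℕ) : heavyCount 1 s = s - 1 := by
  induction s with
  | zero => simp
  | succ s ih =>
    rw [heavyCount_succ, ih]
    obtain rfl | hs := s.eq_zero_or_pos
    · simp
    · rw [if_pos (Nat.succ_le_of_lt (bitWeight_pos hs))]
      omega

theorem heavyCount_succ_add_heavyCount_pred_le (d s : ℕ) :
    heavyCount d (s + 1) + heavyCount (d - 1) s ≤ heavyCount d s + heavyCount (d - 1) (s + 1) := by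
  simp only [heavyCount_succ]
  split_ifs <;> omega

theorem heavyCount_eq_add_halves (d s : ℕ) :
    heavyCount d s = heavyCount d ((s + 1) / 2) + heavyCount (d - 1) (s / 2) := by
  induction s with
  | zero => simp
  | succ s ih =>
    rw [heavyCount_succ, ih]
    obtain ⟨k, rfl | rfl⟩ := s.even_or_odd'
    · rw [show (2 * k + 1 + 1) / 2 = k + 1 by omega, show (2 * k + 1) / 2 = k by omega,
        show 2 * k / 2 = k by omega, heavyCount_succ, bitWeight_two_mul]
      omega
    · rw [show (2 * k + 1 + 1 + 1) / 2 = k + 1 by omega,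
        show (2 * k + 1 + 1) / 2 = k + 1 by omega, show (2 * k + 1) / 2 = k by omega,
        heavyCount_succ (d - 1), bitWeight_two_mul_add_one]
      simp only [tsub_le_iff_right]
      omega

theorem heavyCount_two_mul (d s : ℕ) :
    heavyCount d (2 * s) = heavyCount d s + heavyCount (d - 1) s := by
  rw [heavyCount_eq_add_halves]
  congr 2 <;> omega

theorem heavyCount_two_mul_add_one (d s : ℕ) :
    heavyCount d (2 * s + 1) = heavyCount d (s + 1) + heavyCount (d - 1) s := by
  rw [heavyCount_eq_add_halves]
  congr 2 <;> omega

theorem heavyCount_two_pow_succ (d m : ℕ) :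
    heavyCount d (2 ^ (m + 1)) = heavyCount d (2 ^ m) + heavyCount (d - 1) (2 ^ m) := by
  rw [pow_succ', heavyCount_two_mul]

theorem heavyCount_succ_two_pow (m : ℕ) : heavyCount (m + 1) (2 ^ m) = 0 := by
  induction m with
  | zero => simp [heavyCount_one_left]
  | succ m ih =>
    have := heavyCount_anti (show m + 1 ≤ m + 1 + 1 by omega) (2 ^ m)
    rw [heavyCount_two_pow_succ, Nat.add_sub_cancel, ih]
    omega

theorem heavyCount_self_two_pow (m : ℕ) : heavyCount m (2 ^ m) = 1 := by
  induction m with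
  | zero => simp
  | succ m ih => rw [heavyCount_two_pow_succ, Nat.add_sub_cancel, ih, heavyCount_succ_two_pow]

theorem heavyCount_eq_zero_of_lt_two_pow {m s : ℕ} (h : s < 2 ^ m) : heavyCount m s = 0 := by
  induction m generalizing s with
  | zero => simpa using h
  | succ m ih =>
    rw [pow_succ] at h
    have hhigh : heavyCount (m + 1) ((s + 1) / 2) = 0 := Nat.eq_zero_of_le_zero <|
      (heavyCount_mono _ (by omega : (s + 1) / 2 ≤ 2 ^ m)).trans (heavyCount_succ_two_pow m).le
    rw [heavyCount_eq_add_halves, hhigh, Nat.add_sub_cancel, ih (by omega)]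

theorem heavyCount_add_heavyCount_pred_le {d a b : ℕ} (hba : b ≤ a) :
    heavyCount d a + heavyCount (d - 1) b ≤ heavyCount d (a + b) := by
  induction hn : a + b using Nat.strong_induction_on generalizing d a b with
  | _ n ih =>
    subst hn
    obtain rfl | hb := b.eq_zero_or_pos
    · simp
    by_cases hodd : a % 2 = 1 ∧ b % 2 = 1
    · obtain ⟨⟨x, rfl⟩, y, rfl⟩ : (∃ x, a = 2 * x + 1) ∧ ∃ y, b = 2 * y + 1 :=
        ⟨⟨a / 2, by omega⟩, b / 2, by omega⟩
      rw [show 2 * x + 1 + (2 * y + 1) = 2 * (x + 1 + y) by ring, heavyCount_two_mul,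
        heavyCount_two_mul_add_one, heavyCount_two_mul_add_one]
      have hhigh := ih _ (by omega) (d := d) (a := x + 1) (b := y) (by omega) rfl
      obtain hyx | hyx : y < x ∨ x = y := by omega
      · have hlow := ih _ (by omega) (d := d - 1) (a := x) (b := y + 1) (by omega) rfl
        have hswap := heavyCount_succ_add_heavyCount_pred_le (d - 1) y
        rw [show x + (y + 1) = x + 1 + y by ring] at hlow
        omega
      · subst hyx
        have hlow := ih _ (by omega) (d := d - 1) (a := x + 1) (b := x) (by omega) rfl
        omega
    · have hhigh := ih _ (by omega) (d := d) (a := (a + 1) / 2) (b := (b + 1) / 2) (by omega) rfl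
      have hlow := ih _ (by omega) (d := d - 1) (a := a / 2) (b := b / 2) (by omega) rfl
      rw [heavyCount_eq_add_halves d a, heavyCount_eq_add_halves (d - 1) b,
        heavyCount_eq_add_halves d (a + b)]
      rw [show (a + 1) / 2 + (b + 1) / 2 = (a + b + 1) / 2 by omega] at hhigh
      rw [show a / 2 + b / 2 = (a + b) / 2 by omega] at hlow
      omega

theorem heavyCount_add_heavyCount_le (d a b : ℕ) :
    heavyCount d a + heavyCount d b ≤ heavyCount d (a + b) := by
  wlog hba : b ≤ a generalizing a b
  · rw [add_comm, add_comm a]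
    exact this b a (by omega)
  · exact (Nat.add_le_add_left (heavyCount_anti d.pred_le b) _).trans
      (heavyCount_add_heavyCount_pred_le hba)

theorem sum_heavyCount_le {ι : Type*} (d : ℕ) (s : Finset ι) (f : ι → ℕ) :
    ∑ i ∈ s, heavyCount d (f i) ≤ heavyCount d (∑ i ∈ s, f i) := by
  classical
  induction s using Finset.induction_on with
  | empty => simp
  | insert a s ha ih =>
    rw [Finset.sum_insert ha, Finset.sum_insert ha]
    exact (Nat.add_le_add_left ih _).trans (heavyCount_add_heavyCount_le _ _ _)

/-! ### Inequalities between heavy counts -/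

theorem tauRM_eq_sum_min (r m : ℕ) :
    tauRM r m = (if m < 2 * r + 1 then 1 else 0) +
      ∑ j ∈ Finset.range (min (r + 1) (m - r)), (m - (2 * j + 1)).choose (r - j) := by
  unfold tauRM
  split_ifs with h h' h'
  · omega
  · rw [min_eq_left (by omega), zero_add]
  · rw [min_eq_right (by omega)]
  · omega

theorem tauRM_eq_one_add_sum (r m : ℕ) :
    tauRM r m = 1 + ∑ j ∈ Finset.range (min r (m - r)), (m - (2 * j + 1)).choose (r - j) := by
  rw [tauRM_eq_sum_min]
  split_ifs with h
  · rw [min_eq_right (by omega), min_eq_right (by omega)]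
  · rw [min_eq_left (by omega), min_eq_left (by omega), Finset.sum_range_succ]
    simp [add_comm]

@[simp]
theorem tauRM_zero_left (m : ℕ) : tauRM 0 m = 1 := by
  simp [tauRM_eq_one_add_sum]

theorem tauRM_eq_one_of_le {r m : ℕ} (h : m ≤ r) : tauRM r m = 1 := by
  simp [tauRM_eq_one_add_sum, Nat.sub_eq_zero_of_le h]

theorem tauRM_succ_self {r : ℕ} (hr : 1 ≤ r) : tauRM r (r + 1) = 2 := by
  simp [tauRM_eq_one_add_sum, hr]

theorem tauRM_succ_left_eq_one_add_sum (r m : ℕ) :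
    tauRM (r + 1) m =
      1 + ∑ j ∈ Finset.range (min (r + 1) (m - r)), (m - (2 * j + 1)).choose (r + 1 - j) := by
  rw [tauRM_eq_one_add_sum]
  congr 1
  refine Finset.sum_subset (Finset.range_subset_range.2 (by omega)) fun j hj hj' => ?_
  rw [Finset.mem_range] at hj hj'
  exact Nat.choose_eq_zero_of_lt (by omega)

theorem tauRM_succ_succ (r m : ℕ) :
    tauRM (r + 1) (m + 1) + (if m < 2 * r + 1 then 1 else 0) =
      tauRM (r + 1) m + tauRM r m := by
  have pascal : ∀ j ∈ Finset.range (min (r + 1) (m - r)),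
      (m + 1 - (2 * j + 1)).choose (r + 1 - j) =
        (m - (2 * j + 1)).choose (r + 1 - j) + (m - (2 * j + 1)).choose (r - j) := by
    intro j hj
    rw [Finset.mem_range] at hj
    rw [show m + 1 - (2 * j + 1) = m - (2 * j + 1) + 1 by omega,
      show r + 1 - j = r - j + 1 by omega, Nat.choose_succ_succ, add_comm]
  rw [tauRM_eq_one_add_sum (r + 1) (m + 1), Nat.add_sub_add_right, Finset.sum_congr rfl pascal,
    Finset.sum_add_distrib, tauRM_succ_left_eq_one_add_sum, tauRM_eq_sum_min r]
  omega

theorem heavyCount_two_pow_le_of_halves {r m x y : ℕ} (hy : m < 2 * r + 1 → m - r ≤ bitWeight y)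
    (hhigh : heavyCount (m - r) (2 ^ m) ≤
      tauRM r m + heavyCount (m - r) x + heavyCount (m - r) y)
    (hlow : heavyCount (m - (r + 1)) (2 ^ m) ≤
      tauRM (r + 1) m + heavyCount (m - (r + 1)) x + heavyCount (m - (r + 1)) y) :
    heavyCount (m - r) (2 ^ (m + 1)) ≤
      tauRM (r + 1) (m + 1) + heavyCount (m - r) (2 * x) + heavyCount (m - r) (2 * y + 1) := by
  have htau := tauRM_succ_succ r m
  rw [heavyCount_two_pow_succ, heavyCount_two_mul, heavyCount_two_mul_add_one, heavyCount_succ]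
  rw [← Nat.sub_sub] at hlow
  split_ifs at htau ⊢ <;> omega

theorem heavyCount_two_pow_le_tauRM_add {r m a b : ℕ} (hab : a + b + 1 = 2 ^ m) :
    heavyCount (m - r) (2 ^ m) ≤
      tauRM r m + heavyCount (m - r) a + heavyCount (m - r) b := by
  induction m generalizing r a b with
  | zero => simp [tauRM_eq_one_of_le, Nat.add_assoc]
  | succ m ih =>
    obtain _ | r := r
    · simp [heavyCount_self_two_pow, Nat.add_assoc]
    rw [Nat.add_sub_add_right]
    wlog heven : a % 2 = 0 generalizing a b
    · rw [Nat.add_right_comm]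
      exact this (by omega) (by rw [pow_succ] at hab; omega)
    obtain ⟨x, y, rfl, rfl, hxy⟩ : ∃ x y, a = 2 * x ∧ b = 2 * y + 1 ∧ x + y + 1 = 2 ^ m := by
      rw [pow_succ] at hab
      exact ⟨a / 2, b / 2, by omega⟩
    by_cases hy : m < 2 * r + 1 → m - r ≤ bitWeight y
    · exact heavyCount_two_pow_le_of_halves hy (ih hxy) (ih hxy)
    -- Otherwise `x` is heavy, and moving one element from the first part to the second helps.
    push Not at hy
    have hcompl := bitWeight_add_bitWeight_of_add_add_one_eq_two_pow hxy
    obtain ⟨w, rfl⟩ : ∃ w, x = w + 1 := by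
      refine Nat.exists_eq_succ_of_ne_zero ?_
      rintro rfl
      rw [bitWeight_zero] at hcompl
      omega
    have hw := bitWeight_succ_le w
    have hmoved := heavyCount_two_pow_le_of_halves (r := r) (x := y + 1) (y := w)
      (fun _ => by omega) (ih (by omega)) (ih (by omega))
    have hleft : heavyCount (m - r) (2 * (w + 1)) = heavyCount (m - r) (2 * w + 1) + 1 := by
      rw [mul_add_one, heavyCount_succ, bitWeight_two_mul_add_one, if_pos (by omega)]
    have hright : heavyCount (m - r) (2 * (y + 1)) ≤ heavyCount (m - r) (2 * y + 1) + 1 := by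
      rw [mul_add_one, heavyCount_succ]
      split_ifs <;> omega
    omega

/-- The inequality behind the lower bound on the treewidth of `RM(r,m)`: removing parts of sizes
`a`, `b`, `c` from `2 ^ m` coordinates leaves a constraint code of dimension at least
`tauRM r m`. -/
def SplitBound (r m a b c : ℕ) : Prop :=
  tauRM r m + heavyCount (m - r) a + heavyCount (m - r) b + heavyCount (m - r) c ≤
    heavyCount (m - r) (2 ^ m)

namespace SplitBound

variable {r m a b c x y z : ℕ}

theorem swap (h : SplitBound r m a b c) : SplitBound r m b a c := by
  unfold SplitBound at *
  omega

theorem rotate (h : SplitBound r m a b c) : SplitBound r m b c a := by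
  unfold SplitBound at *
  omega

theorem double (hhigh : SplitBound r m x y z) (hlow : SplitBound (r + 1) m x y z) :
    SplitBound (r + 1) (m + 1) (2 * x) (2 * y) (2 * z) := by
  have htau := tauRM_succ_succ r m
  unfold SplitBound at *
  rw [← Nat.sub_sub] at hlow
  rw [Nat.add_sub_add_right, heavyCount_two_pow_succ]
  simp only [heavyCount_two_mul]
  omega

theorem double_of_distinct_carries (hhigh : SplitBound r m (x + 1) y z)
    (hlow : SplitBound (r + 1) m x (y + 1) z) :
    SplitBound (r + 1) (m + 1) (2 * x + 1) (2 * y + 1) (2 * z) := by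
  have htau := tauRM_succ_succ r m
  have hswap := heavyCount_succ_add_heavyCount_pred_le (m - r) y
  unfold SplitBound at *
  rw [← Nat.sub_sub] at hlow
  rw [Nat.add_sub_add_right, heavyCount_two_pow_succ]
  simp only [heavyCount_two_mul, heavyCount_two_mul_add_one]
  omega

theorem double_of_common_carry (hy : 2 * bitWeight y ≤ m) (hhigh : SplitBound r m (x + 1) y z)
    (hlow : SplitBound (r + 1) m (x + 1) y z) :
    SplitBound (r + 1) (m + 1) (2 * x + 1) (2 * y + 1) (2 * z) := by
  have htau := tauRM_succ_succ r m
  have hx := heavyCount_mono (m - r - 1) (Nat.le_add_right x 1)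
  have hy' := heavyCount_succ (m - r) y
  unfold SplitBound at *
  rw [← Nat.sub_sub] at hlow
  rw [Nat.add_sub_add_right, heavyCount_two_pow_succ]
  simp only [heavyCount_two_mul, heavyCount_two_mul_add_one]
  split_ifs at htau hy' <;> omega

end SplitBound

/-- The triples of part sizes for which `SplitBound` holds. In the second alternative
`c = a + 1` slightly exceeds `2 ^ m / 3`; it arises from the first one when sizes are halved. -/
def BalancedTriple (m a b c : ℕ) : Prop :=
  a + b + c = 2 ^ m ∧
    ((3 * a < 2 ^ m ∧ 3 * b < 2 ^ m ∧ 3 * c < 2 * 2 ^ m) ∨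
      (3 * a + 2 = 2 ^ m ∧ b = a + 1 ∧ c = a + 1))

theorem three_mul_ne_two_pow (x m : ℕ) : 3 * x ≠ 2 ^ m := fun h =>
  absurd (Nat.prime_three.dvd_of_dvd_pow ⟨x, h.symm⟩) (by decide)

theorem BalancedTriple.splitBound_zero {m a b c : ℕ} (hm : 1 ≤ m) (h : BalancedTriple m a b c) :
    SplitBound 0 m a b c := by
  have hpow : 2 ^ 1 ≤ 2 ^ m := Nat.pow_le_pow_right two_pos hm
  obtain ⟨ha, hb, hc⟩ : a < 2 ^ m ∧ b < 2 ^ m ∧ c < 2 ^ m := by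
    unfold BalancedTriple at h
    omega
  simp [SplitBound, heavyCount_self_two_pow, heavyCount_eq_zero_of_lt_two_pow, ha, hb, hc]

theorem BalancedTriple.splitBound_succ {r a b c : ℕ} (hr : 1 ≤ r)
    (h : BalancedTriple (r + 1) a b c) :
    SplitBound r (r + 1) a b c := by
  have hpow : 2 ^ 2 ≤ 2 ^ (r + 1) := Nat.pow_le_pow_right two_pos (by omega)
  unfold BalancedTriple at h
  simp only [SplitBound, tauRM_succ_self hr, Nat.add_sub_cancel_left, heavyCount_one_left]
  omega

section DoublingStep

variable {r m x y z : ℕ}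

theorem splitBound_two_small_odd
    (ih : ∀ {x y z}, BalancedTriple m x y z → SplitBound r m x y z ∧ SplitBound (r + 1) m x y z)
    (hsum : x + y + z + 1 = 2 ^ m) (hx : 3 * (2 * x + 1) < 2 * 2 ^ m)
    (hy : 3 * (2 * y + 1) < 2 * 2 ^ m) (hz : 3 * z < 2 * 2 ^ m) :
    SplitBound (r + 1) (m + 1) (2 * x + 1) (2 * y + 1) (2 * z) := by
  have weight_le (w : ℕ) (hw : 3 * w + 2 = 2 ^ m) : 2 * bitWeight w ≤ m := by
    have := two_mul_bitWeight_add_of_three_mul_add_eq_two_pow le_rfl hw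
    omega
  have third (w : ℕ) (hw : 3 * (2 * w + 1) < 2 * 2 ^ m) :
      3 * (w + 1) < 2 ^ m ∨ 3 * w + 2 = 2 ^ m := by
    have := three_mul_ne_two_pow (w + 1) m
    omega
  obtain hx' | hx' := third x hx <;> obtain hy' | hy' := third y hy
  · exact (ih ⟨by omega, by omega⟩).1.double_of_distinct_carries (ih ⟨by omega, by omega⟩).2
  · have h := ih (x := x + 1) (y := y) (z := z) ⟨by omega, by omega⟩
    exact h.1.double_of_common_carry (weight_le y hy') h.2
  · have h := ih (x := y + 1) (y := x) (z := z) ⟨by omega, by omega⟩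
    exact (h.1.double_of_common_carry (weight_le x hx') h.2).swap
  · have h := ih (x := x) (y := y + 1) (z := z) ⟨by omega, by omega⟩
    exact (h.1.swap.double_of_common_carry (weight_le x hx') h.2.swap).swap

theorem splitBound_large_odd
    (ih : ∀ {x y z}, BalancedTriple m x y z → SplitBound r m x y z ∧ SplitBound (r + 1) m x y z)
    (hsum : x + y + z + 1 = 2 ^ m) (hx : 3 * x < 2 ^ m)
    (hy : 3 * (2 * y + 1) < 2 * 2 ^ m) (hz : 3 * (2 * z + 1) < 2 * (2 * 2 ^ m)) :
    SplitBound (r + 1) (m + 1) (2 * x) (2 * y + 1) (2 * z + 1) := by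
  refine .rotate (.rotate ?_)
  have hy3 := three_mul_ne_two_pow (y + 1) m
  have hz3 := three_mul_ne_two_pow (z + 1) (m + 1)
  rw [pow_succ'] at hz3
  by_cases hy' : 3 * (y + 1) < 2 ^ m
  · by_cases hz' : 3 * (z + 1) < 2 * 2 ^ m
    · exact (ih ⟨by omega, by omega⟩).1.rotate.double_of_distinct_carries
        (ih ⟨by omega, by omega⟩).2.rotate
    · have h := ih (x := x) (y := y + 1) (z := z) ⟨by omega, by omega⟩
      have hweight := two_mul_bitWeight_add_of_three_mul_add_eq_two_pow (m := m + 1) (x := z)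
        le_rfl (by rw [pow_succ']; omega)
      exact h.1.rotate.double_of_common_carry (by omega) h.2.rotate
  · have h := ih (x := x) (y := y) (z := z + 1) ⟨by omega, by omega⟩
    have hweight := two_mul_bitWeight_add_of_three_mul_add_eq_two_pow (m := m) (x := y)
      le_rfl (by omega)
    exact (h.1.rotate.swap.double_of_common_carry (by omega) h.2.rotate.swap).swap

theorem splitBound_exceptional
    (ih : ∀ {x y z}, BalancedTriple m x y z → SplitBound r m x y z ∧ SplitBound (r + 1) m x y z)
    (hm : 1 ≤ m) (hx : 3 * x + 1 = 2 ^ m) :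
    SplitBound (r + 1) (m + 1) (2 * x) (2 * x + 1) (2 * x + 1) := by
  have hpow : 2 ^ 1 ≤ 2 ^ m := Nat.pow_le_pow_right two_pos hm
  have h := ih (x := x) (y := x) (z := x + 1) ⟨by omega, by omega⟩
  have hweight : 2 * bitWeight x ≤ m :=
    (two_mul_bitWeight_add_of_three_mul_add_eq_two_pow zero_le_one hx).le
  exact (h.1.rotate.rotate.double_of_common_carry hweight h.2.rotate.rotate).rotate.rotate

end DoublingStep

theorem BalancedTriple.splitBound {r m a b c : ℕ} (hrm : r < m) (h : BalancedTriple m a b c) :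
    SplitBound r m a b c := by
  induction m generalizing r a b c with
  | zero => omega
  | succ m ih =>
    obtain _ | r := r
    · exact h.splitBound_zero (by omega)
    obtain rfl | hr : m = r + 1 ∨ r + 1 < m := by omega
    · exact h.splitBound_succ (by omega)
    have ih' {x y z : ℕ} (h : BalancedTriple m x y z) :
        SplitBound r m x y z ∧ SplitBound (r + 1) m x y z :=
      ⟨ih (by omega) h, ih hr h⟩
    obtain ⟨hsum, ⟨ha, hb, hc⟩ | ⟨ha, rfl, rfl⟩⟩ := h <;> rw [pow_succ'] at *
    · obtain ⟨x, rfl | rfl⟩ := a.even_or_odd' <;> obtain ⟨y, rfl | rfl⟩ := b.even_or_odd' <;>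
        obtain ⟨z, rfl | rfl⟩ := c.even_or_odd' <;> try omega
      · have h' := ih' (x := x) (y := y) (z := z) ⟨by omega, by omega⟩
        exact h'.1.double h'.2
      · exact splitBound_large_odd ih' (by omega) (by omega) (by omega) (by omega)
      · exact (splitBound_large_odd ih' (by omega) (by omega) (by omega) (by omega)).swap
      · exact splitBound_two_small_odd ih' (by omega) (by omega) (by omega) (by omega)
    · obtain ⟨x, rfl⟩ : ∃ x, a = 2 * x := ⟨a / 2, by omega⟩
      exact splitBound_exceptional ih' (by omega) (by omega)

theorem BalancedTriple.third {m : ℕ} (hm : 1 ≤ m) :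
    BalancedTriple m (2 ^ m / 3) 1 (2 ^ m - 1 - 2 ^ m / 3) := by
  have hthree := three_mul_ne_two_pow (2 ^ m / 3) m
  obtain rfl | hm : m = 1 ∨ 2 ≤ m := by omega
  · norm_num [BalancedTriple]
  · have hpow : 2 ^ 2 ≤ 2 ^ m := Nat.pow_le_pow_right two_pos hm
    exact ⟨by omega, by omega⟩

theorem exists_sum_le_lt_sum_add {ι : Type*} [DecidableEq ι] {s : Finset ι} {f : ι → ℕ}
    {n : ℕ} (h : n < ∑ i ∈ s, f i) :
    ∃ t ⊆ s, ∃ w ∈ s \ t, ∑ i ∈ t, f i ≤ n ∧ n < ∑ i ∈ t, f i + f w := by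
  induction s using Finset.induction_on with
  | empty => simp at h
  | insert a s ha ih =>
    rw [Finset.sum_insert ha] at h
    by_cases hs : n < ∑ i ∈ s, f i
    · obtain ⟨t, hts, w, hw, ht⟩ := ih hs
      exact ⟨t, hts.trans (Finset.subset_insert a s), w,
        Finset.sdiff_subset_sdiff (Finset.subset_insert a s) le_rfl hw, ht⟩
    · exact ⟨s, Finset.subset_insert a s, a, by simp [ha], by omega, by omega⟩

theorem tauRM_add_sum_heavyCount_add_le {ι : Type*} {r m h : ℕ} {s : Finset ι} {f : ι → ℕ}
    (hrm : r < m) (hsmall : ∀ w ∈ s, f w ≤ 2 ^ m / 3) (hbig : h + 2 ^ m / 3 < 2 ^ m)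
    (hsum : ∑ w ∈ s, f w + h ≤ 2 ^ m) :
    tauRM r m + ∑ w ∈ s, heavyCount (m - r) (f w) + heavyCount (m - r) h ≤
      heavyCount (m - r) (2 ^ m) := by
  classical
  obtain hle | hlt := le_or_gt (∑ w ∈ s, f w) (2 ^ m / 3)
  · have hthird := (BalancedTriple.third (by omega : 1 ≤ m)).splitBound hrm
    have hs := (sum_heavyCount_le (m - r) s f).trans (heavyCount_mono _ hle)
    have hh := heavyCount_mono (m - r) (by omega : h ≤ 2 ^ m - 1 - 2 ^ m / 3)
    unfold SplitBound at hthird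
    omega
  · obtain ⟨t, hts, w, hw, htle, hlt⟩ := exists_sum_le_lt_sum_add hlt
    have hsplit (g : ι → ℕ) :
        ∑ i ∈ s, g i = ∑ i ∈ t, g i + g w + ∑ i ∈ (s \ t).erase w, g i := by
      rw [← Finset.sum_sdiff hts, ← Finset.add_sum_erase _ g hw]
      ring
    have hthree := three_mul_ne_two_pow (2 ^ m / 3) m
    have hfw := hsmall w (Finset.mem_sdiff.1 hw).1
    have hbal : BalancedTriple m (∑ i ∈ t, f i) (f w) (2 ^ m - ∑ i ∈ t, f i - f w) :=
      ⟨by omega, by omega⟩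
    have hbound := hbal.splitBound hrm
    have ht := sum_heavyCount_le (m - r) t f
    have hrest := (Nat.add_le_add_right (sum_heavyCount_le (m - r) ((s \ t).erase w) f) _).trans
      (heavyCount_add_heavyCount_le (m - r) _ h)
    have hmono := heavyCount_mono (m - r) (by rw [hsplit f] at hsum; omega :
      ∑ i ∈ (s \ t).erase w, f i + h ≤ 2 ^ m - ∑ i ∈ t, f i - f w)
    rw [hsplit]
    unfold SplitBound at hbound
    omega

theorem tauRM_add_sum_heavyCount_le {ι : Type*} {r m : ℕ} {s : Finset ι} {f : ι → ℕ} {v : ι}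
    (hrm : r < m) (hsmall : ∀ w ∈ s, w ≠ v → f w ≤ 2 ^ m / 3)
    (hv : v ∈ s → f v + 2 ^ m / 3 < 2 ^ m) (hsum : ∑ w ∈ s, f w ≤ 2 ^ m) :
    tauRM r m + ∑ w ∈ s, heavyCount (m - r) (f w) ≤ heavyCount (m - r) (2 ^ m) := by
  classical
  by_cases hvs : v ∈ s
  · rw [← Finset.sum_erase_add _ _ hvs] at hsum ⊢
    rw [← add_assoc]
    refine tauRM_add_sum_heavyCount_add_le hrm (fun w hw => ?_) (hv hvs) hsum
    exact hsmall w (Finset.mem_of_mem_erase hw) (Finset.ne_of_mem_erase hw)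
  · have hpow := Nat.two_pow_pos m
    exact tauRM_add_sum_heavyCount_add_le (h := 0) hrm
      (fun w hw => hsmall w hw (ne_of_mem_of_not_mem hw hvs)) (by omega) hsum

/-! ### Tree decompositions and trellises -/

section Tree

variable {V : Type} {T : SimpleGraph V} {u v w x : V}

theorem mem_compAway_iff_exists_walk :
    x ∈ compAway T v u ↔ ∃ p : T.Walk u x, s(v, u) ∉ p.edges :=
  SimpleGraph.reachable_deleteEdges_iff_exists_walk

theorem self_mem_compAway (T : SimpleGraph V) (v u : V) : u ∈ compAway T v u :=
  SimpleGraph.Reachable.refl u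

theorem notMem_compAway (hT : T.IsAcyclic) (h : T.Adj v u) : v ∉ compAway T v u := fun hv =>
  SimpleGraph.isBridge_iff.1 (SimpleGraph.isAcyclic_iff_forall_adj_isBridge.1 hT h) hv.symm

theorem disjoint_compAway_symm (hT : T.IsAcyclic) (h : T.Adj u v) :
    Disjoint (compAway T u v) (compAway T v u) := by
  refine Set.disjoint_left.2 fun x hxv hxu => notMem_compAway hT h ?_
  unfold compAway at hxu
  rw [Sym2.eq_swap] at hxu
  exact hxv.trans hxu.symm

theorem compAway_subset_compAway (hT : T.IsAcyclic) (hw : T.Adj u w) (hne : w ≠ v) :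
    compAway T u w ⊆ compAway T v u := by
  classical
  intro x hx
  obtain ⟨p, hp⟩ := mem_compAway_iff_exists_walk.1 hx
  have hu : u ∉ p.support := fun hu => notMem_compAway hT hw <|
    mem_compAway_iff_exists_walk.2
      ⟨p.takeUntil u hu, fun h => hp (p.edges_takeUntil_subset_edges hu h)⟩
  refine mem_compAway_iff_exists_walk.2 ⟨.cons hw p, ?_⟩
  rw [SimpleGraph.Walk.edges_cons, List.mem_cons, not_or]
  refine ⟨?_, fun h => hu (p.snd_mem_support_of_mem_edges h)⟩
  rw [Sym2.eq_iff]
  rintro (⟨-, rfl⟩ | ⟨rfl, -⟩)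
  · exact hw.ne rfl
  · exact hne rfl

theorem disjoint_compAway_compAway (hT : T.IsAcyclic) (hv : T.Adj u v) (hw : T.Adj u w)
    (hne : w ≠ v) : Disjoint (compAway T u w) (compAway T u v) :=
  (disjoint_compAway_symm hT hv).symm.mono_left (compAway_subset_compAway hT hw hne)

variable [Fintype V]

@[simp]
theorem mem_nbrFinset : v ∈ nbrFinset T u ↔ T.Adj u v := by
  simp [nbrFinset]

variable {n : ℕ}

theorem sum_ncard_compAway_add_le (hT : T.IsAcyclic) (ω : Fin n → V) (u : V) :
    ∑ w ∈ nbrFinset T u, (ω ⁻¹' compAway T u w).ncard + (ω ⁻¹' {u}).ncard ≤ n := by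
  have hdisj : (nbrFinset T u : Set V).PairwiseDisjoint fun w => ω ⁻¹' compAway T u w :=
    fun a ha b hb hab => (disjoint_compAway_compAway hT (mem_nbrFinset.1 hb)
      (mem_nbrFinset.1 ha) hab).preimage ω
  have hdisj' : Disjoint (⋃ w ∈ nbrFinset T u, ω ⁻¹' compAway T u w) (ω ⁻¹' {u}) := by
    simp only [Set.disjoint_iUnion_left]
    exact fun w hw => .preimage ω <|
      Set.disjoint_singleton_right.2 (notMem_compAway hT (mem_nbrFinset.1 hw))
  calc ∑ w ∈ nbrFinset T u, (ω ⁻¹' compAway T u w).ncard + (ω ⁻¹' {u}).ncard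
      = (⋃ w ∈ nbrFinset T u, ω ⁻¹' compAway T u w).ncard + (ω ⁻¹' {u}).ncard := by
        rw [← finsum_mem_coe_finset, ← Set.Finite.ncard_biUnion (Finset.finite_toSet _)
          (fun _ _ => Set.toFinite _) hdisj]
        simp only [Finset.mem_coe]
    _ = ((⋃ w ∈ nbrFinset T u, ω ⁻¹' compAway T u w) ∪ ω ⁻¹' {u}).ncard :=
        (Set.ncard_union_eq hdisj').symm
    _ ≤ n := (Set.ncard_le_card _).trans_eq (Nat.card_fin n)

theorem exists_balanced_vertex [Nonempty V] (hT : T.IsAcyclic) (ω : Fin n → V) (k : ℕ) :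
    ∃ u v, (∀ w ∈ nbrFinset T u, w ≠ v → (ω ⁻¹' compAway T u w).ncard ≤ k) ∧
      (v ∈ nbrFinset T u → (ω ⁻¹' compAway T u v).ncard + k < n) := by
  classical
  by_cases hlarge : ∃ p : V × V, T.Adj p.1 p.2 ∧ k < (ω ⁻¹' compAway T p.1 p.2).ncard
  · obtain ⟨⟨v, u⟩, ⟨hadj, hk⟩, hmin⟩ :=
      Set.exists_min_image _ (fun p : V × V => (compAway T p.1 p.2).ncard) (Set.toFinite _) hlarge
    refine ⟨u, v, fun w hw hne => ?_, fun _ => ?_⟩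
    · by_contra! hcon
      rw [mem_nbrFinset] at hw
      refine (hmin (u, w) ⟨hw, hcon⟩).not_gt (Set.ncard_lt_ncard ?_)
      exact (compAway_subset_compAway hT hw hne).ssubset_of_mem_notMem
        (self_mem_compAway T v u) (notMem_compAway hT hw)
    · have hdisj : Disjoint (ω ⁻¹' compAway T v u) (ω ⁻¹' compAway T u v) :=
        (disjoint_compAway_symm hT hadj).preimage ω
      have hunion := Set.ncard_le_card (ω ⁻¹' compAway T v u ∪ ω ⁻¹' compAway T u v)
      rw [Set.ncard_union_eq hdisj, Nat.card_fin] at hunion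
      replace hk : k < (ω ⁻¹' compAway T v u).ncard := hk
      omega
  · push Not at hlarge
    obtain ⟨u⟩ := ‹Nonempty V›
    exact ⟨u, u, fun w hw _ => hlarge (u, w) (mem_nbrFinset.1 hw), fun hu => by simp at hu⟩

end Tree

section Hasse

variable {α : Type} [LinearOrder α] {a b i j : α}

open SimpleGraph

theorem isAcyclic_hasse (α : Type) [LinearOrder α] : (hasse α).IsAcyclic := by
  have isBridge_of_covBy {i j : α} (hij : i ⋖ j) : (hasse α).IsBridge s(i, j) := by
    have le_of_reachable (x) (hx : ((hasse α).deleteEdges {s(i, j)}).Reachable i x) : x ≤ i := by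
      rw [reachable_iff_reflTransGen] at hx
      induction hx with
      | refl => exact le_rfl
      | @tail y z _ hyz hy =>
        rw [deleteEdges_adj, hasse_adj] at hyz
        obtain ⟨hyz | hzy, hedge⟩ := hyz
        · by_contra! hz
          obtain rfl := hy.eq_of_not_lt fun h => hyz.2 h hz
          exact hedge (by rw [hyz.unique_right hij]; rfl)
        · exact hzy.lt.le.trans hy
    exact isBridge_iff.2 fun h => (le_of_reachable j h).not_gt hij.lt
  refine isAcyclic_iff_forall_adj_isBridge.2 fun i j hij => ?_
  rcases hij with hij | hji
  · exact isBridge_of_covBy hij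
  · exact Sym2.eq_swap ▸ isBridge_of_covBy hji

theorem isTree_pathGraph (n : ℕ) : (pathGraph (n + 1)).IsTree :=
  ⟨pathGraph_connected n, isAcyclic_hasse _⟩

variable [SuccOrder α] [IsSuccArchimedean α]

theorem reachable_hasse_deleteEdges (hab : a ≤ b) (h : i ∈ Set.Icc a b → j ∉ Set.Icc a b) :
    ((hasse α).deleteEdges {s(i, j)}).Reachable a b := by
  rw [reachable_iff_reflTransGen]
  refine reflTransGen_of_succ_of_le _ (fun k hk => ?_) hab
  have hkb : k ⋖ Order.succ k := Order.covBy_succ_of_not_isMax hk.2.not_isMax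
  refine (deleteEdges_adj ..).2 ⟨.inl hkb, fun hedge => ?_⟩
  have hk' : k ∈ Set.Icc a b := ⟨hk.1, hk.2.le⟩
  have hsucc : Order.succ k ∈ Set.Icc a b := ⟨hk.1.trans hkb.lt.le, Order.succ_le_of_lt hk.2⟩
  rcases Sym2.eq_iff.1 hedge with ⟨rfl, rfl⟩ | ⟨rfl, rfl⟩
  · exact h hk' hsucc
  · exact h hsucc hk'

theorem Ioi_subset_compAway_hasse (hij : i ⋖ j) : Set.Ioi i ⊆ compAway (hasse α) i j :=
  fun _ hx => reachable_hasse_deleteEdges (hij.ge_of_gt hx) fun hi => absurd hi.1 hij.lt.not_ge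

theorem Iio_subset_compAway_hasse (hij : j ⋖ i) : Set.Iio i ⊆ compAway (hasse α) i j :=
  fun _ hx => (reachable_hasse_deleteEdges (hij.le_of_lt hx)
    fun hi => absurd hi.2 hij.lt.not_ge).symm

end Hasse

section Width

variable {F : Type} [Field F] {n : ℕ} {C : Submodule F (Fin n → F)} {J K : Set (Fin n)}

theorem mem_supportedOn {f : Fin n → F} : f ∈ supportedOn F J ↔ ∀ i ∉ J, f i = 0 := by
  simp [supportedOn, Submodule.mem_pi]

theorem shortDim_mono (C : Submodule F (Fin n → F)) (h : J ⊆ K) : shortDim C J ≤ shortDim C K :=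
  Submodule.finrank_mono <| inf_le_inf_left C fun _ hf =>
    mem_supportedOn.2 fun i hi => mem_supportedOn.1 hf i fun hJ => hi (h hJ)

@[simp]
theorem shortDim_empty (C : Submodule F (Fin n → F)) : shortDim C ∅ = 0 := by
  have : supportedOn F (∅ : Set (Fin n)) = ⊥ :=
    (Submodule.eq_bot_iff _).2 fun f hf => funext fun i => mem_supportedOn.1 hf i id
  rw [shortDim, this, inf_bot_eq, finrank_bot]

@[simp]
theorem shortDim_univ (C : Submodule F (Fin n → F)) : shortDim C Set.univ = finrank F C := by
  have : supportedOn F (Set.univ : Set (Fin n)) = ⊤ :=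
    (Submodule.eq_top_iff').2 fun f => mem_supportedOn.2 fun i hi => absurd trivial hi
  rw [shortDim, this, inf_top_eq]

theorem shortDim_le_sum {ι : Type} {s : Finset ι} {L : ι → Set (Fin n)}
    (h : J.Nonempty → ∃ u ∈ s, J ⊆ L u) : shortDim C J ≤ ∑ u ∈ s, shortDim C (L u) := by
  obtain rfl | hJ := J.eq_empty_or_nonempty
  · simp
  · obtain ⟨u, hu, hsub⟩ := h hJ
    exact (shortDim_mono C hsub).trans
      (Finset.single_le_sum (f := fun u => shortDim C (L u)) (fun _ _ => Nat.zero_le _) hu)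

/- A trellis is a tree decomposition on the path, whose two ends at `i` are the past and the
future of `i`. -/
theorem kappaNode_pathGraph_le (C : Submodule F (Fin n → F)) (π : Equiv.Perm (Fin n)) (i : Fin n) :
    kappaNode C (SimpleGraph.pathGraph n) π.symm i ≤
      finrank F C - shortDim C (π '' {j | j < i}) - shortDim C (π '' {j | i < j}) := by
  classical
  rw [kappaNode, Nat.sub_sub,
    ← Finset.sum_filter_add_sum_filter_not (nbrFinset (SimpleGraph.pathGraph n) i) (· < i)]
  refine Nat.sub_le_sub_left (add_le_add ?_ ?_) _ <;> refine shortDim_le_sum ?_ <;>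
    rw [Set.image_nonempty, π.image_eq_preimage_symm] <;> rintro ⟨x, hx⟩
  · have hcov : Order.pred i ⋖ i := Order.pred_covBy_of_not_isMin (not_isMin_of_lt hx)
    exact ⟨Order.pred i, Finset.mem_filter.2 ⟨mem_nbrFinset.2 (.inr hcov), hcov.lt⟩,
      Set.preimage_mono (Iio_subset_compAway_hasse hcov)⟩
  · have hcov : i ⋖ Order.succ i := Order.covBy_succ_of_not_isMax (not_isMax_of_lt hx)
    exact ⟨Order.succ i, Finset.mem_filter.2 ⟨mem_nbrFinset.2 (.inl hcov), hcov.lt.not_gt⟩,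
      Set.preimage_mono (Ioi_subset_compAway_hasse hcov)⟩

theorem treeWidth_le_trellisWidth (hn : 0 < n) (C : Submodule F (Fin n → F)) :
    treeWidth C ≤ trellisWidth C := by
  obtain ⟨k, rfl⟩ := Nat.exists_eq_add_one.2 hn
  refine le_csInf ⟨_, 1, rfl⟩ ?_
  rintro _ ⟨π, rfl⟩
  calc treeWidth C ≤ constraintComplexity C (SimpleGraph.pathGraph (k + 1)) π.symm :=
        Nat.sInf_le ⟨k + 1, _, _, isTree_pathGraph k, rfl⟩
    _ ≤ _ := Finset.sup_mono_fun fun i _ => kappaNode_pathGraph_le C π i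

theorem le_treeWidth {t : ℕ}
    (h : ∀ (N : ℕ) (T : SimpleGraph (Fin N)) (ω : Fin n → Fin N), T.IsTree →
      ∃ v, t ≤ kappaNode C T ω v) : t ≤ treeWidth C := by
  refine le_csInf ⟨_, 1, SimpleGraph.pathGraph 1, 0, isTree_pathGraph 0, rfl⟩ ?_
  rintro _ ⟨N, T, ω, hT, rfl⟩
  obtain ⟨v, hv⟩ := h N T ω hT
  exact hv.trans (Finset.le_sup (Finset.mem_univ v))

end Width

/-! ### Plotkin's construction -/

section Plotkin

variable {F : Type} [Field F]

theorem finrank_map_fst_add_finrank_comap_inr {V W : Type} [AddCommGroup V] [Module F V]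
    [AddCommGroup W] [Module F W] [FiniteDimensional F V] [FiniteDimensional F W]
    (P : Submodule F (V × W)) :
    finrank F (P.map (LinearMap.fst F V W)) + finrank F (P.comap (LinearMap.inr F V W)) =
      finrank F P := by
  have h := ((LinearMap.fst F V W).domRestrict P).finrank_range_add_finrank_ker
  rwa [LinearMap.range_domRestrict, LinearMap.ker_domRestrict, ← Submodule.finrank_map_subtype_eq,
    Submodule.map_comap_subtype, LinearMap.ker_fst, inf_comm, ← Submodule.map_comap_eq,
    ← (Submodule.equivMapOfInjective _ LinearMap.inr_injective _).finrank_eq] at h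

variable {n n' : ℕ} (e : Fin n ⊕ Fin n ≃ Fin n') {A B : Submodule F (Fin n → F)}
  {J : Set (Fin n')}

/-- The coordinates `(u, v)` of the word `(u | u + v)`, whose left and right halves are placed on
the coordinates of `Fin n'` by `e`. -/
def plotkinEquiv : (Fin n' → F) ≃ₗ[F] (Fin n → F) × (Fin n → F) where
  toFun f := (fun i => f (e (.inl i)), fun i => f (e (.inr i)) - f (e (.inl i)))
  invFun p := Sum.elim p.1 (p.1 + p.2) ∘ e.symm
  map_add' f g := by ext i <;> simp [add_sub_add_comm]
  map_smul' c f := by ext i <;> simp [mul_sub]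
  left_inv f := by
    funext k
    obtain ⟨i | i, rfl⟩ := e.surjective k <;> simp
  right_inv p := by ext i <;> simp

/-- Plotkin's `(u | u + v)` construction, with `u ∈ A` and `v ∈ B`. -/
def plotkin (A B : Submodule F (Fin n → F)) : Submodule F (Fin n' → F) :=
  (A.prod B).comap (plotkinEquiv e).toLinearMap

/-- The part of a coordinate set lying in the left half. -/
def leftHalf (J : Set (Fin n')) : Set (Fin n) := {i | e (.inl i) ∈ J}

/-- The part of a coordinate set lying in the right half. -/
def rightHalf (J : Set (Fin n')) : Set (Fin n) := {i | e (.inr i) ∈ J}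

theorem ncard_leftHalf_add_ncard_rightHalf (J : Set (Fin n')) :
    (leftHalf e J).ncard + (rightHalf e J).ncard = J.ncard := by
  have hinl : Function.Injective (e ∘ Sum.inl) := e.injective.comp Sum.inl_injective
  have hinr : Function.Injective (e ∘ Sum.inr) := e.injective.comp Sum.inr_injective
  have hunion : e ∘ Sum.inl '' leftHalf e J ∪ e ∘ Sum.inr '' rightHalf e J = J := by
    ext k
    obtain ⟨i | i, rfl⟩ := e.surjective k <;> simp [leftHalf, rightHalf]
  have hdisj : Disjoint (e ∘ Sum.inl '' leftHalf e J) (e ∘ Sum.inr '' rightHalf e J) := by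
    rw [Set.disjoint_left]
    rintro _ ⟨i, -, rfl⟩ ⟨j, -, hj⟩
    simp at hj
  rw [← Set.ncard_image_of_injective _ hinl, ← Set.ncard_image_of_injective _ hinr,
    ← Set.ncard_union_eq hdisj, hunion]

theorem plotkin_sumComm (hBA : B ≤ A) :
    plotkin ((Equiv.sumComm _ _).trans e) A B = plotkin e A B := by
  suffices h : ∀ e : Fin n ⊕ Fin n ≃ Fin n',
      plotkin e A B ≤ plotkin ((Equiv.sumComm _ _).trans e) A B by
    refine le_antisymm ((h _).trans_eq ?_) (h e)
    congr 1
    ext x : 1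
    simp
  rintro e f ⟨hu, hv⟩
  have hswap : plotkinEquiv ((Equiv.sumComm _ _).trans e) f =
      ((plotkinEquiv e f).1 + (plotkinEquiv e f).2, -(plotkinEquiv e f).2) := by
    ext i <;> simp [plotkinEquiv]
  change plotkinEquiv ((Equiv.sumComm _ _).trans e) f ∈ A.prod B
  rw [hswap]
  exact ⟨A.add_mem hu (hBA hv), B.neg_mem hv⟩

theorem mem_map_plotkinEquiv_iff {u v : Fin n → F} :
    (u, v) ∈ (plotkin e A B ⊓ supportedOn F J).map (plotkinEquiv e).toLinearMap ↔
      (u ∈ A ∧ v ∈ B) ∧ (∀ i ∉ leftHalf e J, u i = 0) ∧ ∀ i ∉ rightHalf e J, u i + v i = 0 := by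
  rw [Submodule.mem_map_equiv, Submodule.mem_inf, mem_supportedOn, e.surjective.forall, Sum.forall]
  simp [plotkin, plotkinEquiv, leftHalf, rightHalf]

theorem shortDim_plotkin (A B : Submodule F (Fin n → F)) (J : Set (Fin n')) :
    shortDim (plotkin e A B) J =
      finrank F (((plotkin e A B ⊓ supportedOn F J).map (plotkinEquiv e).toLinearMap).map
        (LinearMap.fst F _ _)) +
      finrank F (((plotkin e A B ⊓ supportedOn F J).map (plotkinEquiv e).toLinearMap).comap
        (LinearMap.inr F _ _)) := by
  rw [finrank_map_fst_add_finrank_comap_inr]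
  exact ((plotkinEquiv e).finrank_map_eq _).symm

theorem shortDim_plotkin_le (A B : Submodule F (Fin n → F)) (J : Set (Fin n')) :
    shortDim (plotkin e A B) J ≤ shortDim A (leftHalf e J) + shortDim B (rightHalf e J) := by
  rw [shortDim_plotkin]
  refine add_le_add (Submodule.finrank_mono ?_) (Submodule.finrank_mono ?_)
  · rintro _ ⟨⟨u, v⟩, huv, rfl⟩
    obtain ⟨⟨hu, -⟩, hl, -⟩ := (mem_map_plotkinEquiv_iff e).1 huv
    exact ⟨hu, mem_supportedOn.2 hl⟩
  · intro v hv
    obtain ⟨⟨-, hv⟩, -, hr⟩ := (mem_map_plotkinEquiv_iff e).1 hv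
    exact ⟨hv, mem_supportedOn.2 fun i hi => by simpa using hr i hi⟩

theorem le_shortDim_plotkin (A B : Submodule F (Fin n → F)) (h : leftHalf e J ⊆ rightHalf e J) :
    shortDim A (leftHalf e J) + shortDim B (rightHalf e J) ≤ shortDim (plotkin e A B) J := by
  rw [shortDim_plotkin]
  refine add_le_add (Submodule.finrank_mono ?_) (Submodule.finrank_mono ?_)
  · rintro u ⟨hu, hl⟩
    rw [SetLike.mem_coe, mem_supportedOn] at hl
    exact ⟨(u, 0), (mem_map_plotkinEquiv_iff e).2
      ⟨⟨hu, B.zero_mem⟩, hl, fun i hi => by simpa using hl i fun hi' => hi (h hi')⟩, rfl⟩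
  · rintro v ⟨hv, hr⟩
    rw [SetLike.mem_coe, mem_supportedOn] at hr
    exact (mem_map_plotkinEquiv_iff e).2
      ⟨⟨A.zero_mem, hv⟩, fun _ _ => rfl, fun i hi => by simpa using hr i hi⟩

end Plotkin

/-! ### Shortenings of Reed–Muller codes -/

section LowDegreeCode

/-- The point of `{0,1}^m` with index `i`. -/
def bitPoint {m : ℕ} (i : Fin (2 ^ m)) : Fin m → ZMod 2 :=
  fun j => if Nat.testBit i.val j.val then 1 else 0

/-- The evaluation vector of the monomial with exponents `s`. -/
def monomialWord {m : ℕ} (s : Fin m → ℕ) : Fin (2 ^ m) → ZMod 2 :=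
  fun i => ∏ j, bitPoint i j ^ s j

/-- The evaluation code of the polynomials of degree less than `k` in `m` variables. It is
`RM(k - 1, m)`, and counting from `k` makes room for the zero code `k = 0`, which is needed as
`RM(-1, m)` in the Plotkin recursion. -/
def lowDegreeCode (m k : ℕ) : Submodule (ZMod 2) (Fin (2 ^ m) → ZMod 2) :=
  Submodule.span (ZMod 2) (monomialWord '' {s | ∑ j, s j < k})

theorem RMcode_eq_lowDegreeCode (r m : ℕ) : RMcode r m = lowDegreeCode m (r + 1) := by
  refine le_antisymm (Submodule.span_le.2 ?_) (Submodule.span_le.2 ?_)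
  · rintro _ ⟨f, hf, rfl⟩
    have hexpand : (fun i : Fin (2 ^ m) => MvPolynomial.eval (bitPoint i) f) =
        ∑ s ∈ f.support, f.coeff s • monomialWord s := by
      ext i
      simp [MvPolynomial.eval_eq', monomialWord]
    refine hexpand ▸ Submodule.sum_mem _ fun s hs => Submodule.smul_mem _ _ <|
      Submodule.subset_span ⟨s, Nat.lt_succ_of_le ?_, rfl⟩
    rw [← Finsupp.degree_eq_sum]
    exact (MvPolynomial.le_totalDegree hs).trans hf
  · rintro _ ⟨s, hs, rfl⟩
    refine Submodule.subset_span
      ⟨MvPolynomial.monomial (Finsupp.equivFunOnFinite.symm s) 1, ?_, ?_⟩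
    · refine (MvPolynomial.totalDegree_monomial_le ..).trans ?_
      simpa [Finsupp.sum_fintype] using Nat.le_of_lt_succ hs
    · ext i
      simp [MvPolynomial.eval_monomial, Finsupp.prod_fintype, monomialWord, bitPoint]

@[simp]
theorem lowDegreeCode_zero_right (m : ℕ) : lowDegreeCode m 0 = ⊥ := by
  simp [lowDegreeCode]

theorem lowDegreeCode_zero_succ (k : ℕ) : lowDegreeCode 0 (k + 1) = ⊤ := by
  refine Submodule.eq_top_iff'.2 fun f => ?_
  have hf : f = f 0 • monomialWord Fin.elim0 := by
    ext i
    rw [Subsingleton.elim (α := Fin 1) i 0]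
    simp [monomialWord]
  exact hf ▸ Submodule.smul_mem _ _ (Submodule.subset_span ⟨_, by simp, rfl⟩)

theorem lowDegreeCode_mono (m : ℕ) : Monotone (lowDegreeCode m) := fun _ _ h =>
  Submodule.span_mono <| Set.image_mono fun _ hs => lt_of_lt_of_le hs h

/-- The splitting of the indices of `{0,1}^(m+1)` by the value of the first coordinate, which is
the least significant bit of the index. -/
def bitEquiv (m : ℕ) : Fin (2 ^ m) ⊕ Fin (2 ^ m) ≃ Fin (2 ^ (m + 1)) :=
  (Equiv.boolProdEquivSum _).symm.trans <| (Equiv.prodComm _ _).trans <|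
    (Equiv.prodCongrRight fun _ => finTwoEquiv.symm).trans <|
      finProdFinEquiv.trans (finCongr (pow_succ 2 m).symm)

@[simp]
theorem bitEquiv_inl_val {m : ℕ} (i : Fin (2 ^ m)) : (bitEquiv m (.inl i)).val = 2 * i :=
  Nat.zero_add _

@[simp]
theorem bitEquiv_inr_val {m : ℕ} (i : Fin (2 ^ m)) : (bitEquiv m (.inr i)).val = 2 * i + 1 :=
  Nat.add_comm 1 _

@[simp]
theorem bitPoint_bitEquiv_inl {m : ℕ} (i : Fin (2 ^ m)) :
    bitPoint (bitEquiv m (.inl i)) = Fin.cons 0 (bitPoint i) := by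
  ext j
  cases j using Fin.cases <;> simp [bitPoint, Nat.testBit_succ]

@[simp]
theorem bitPoint_bitEquiv_inr {m : ℕ} (i : Fin (2 ^ m)) :
    bitPoint (bitEquiv m (.inr i)) = Fin.cons 1 (bitPoint i) := by
  have hdiv : (2 * i.val + 1) / 2 = i := by omega
  ext j
  cases j using Fin.cases <;> simp [bitPoint, Nat.testBit_succ, hdiv]

theorem plotkinEquiv_monomialWord_cons_zero {m : ℕ} (t : Fin m → ℕ) :
    plotkinEquiv (bitEquiv m) (monomialWord (Fin.cons 0 t)) = (monomialWord t, 0) := by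
  ext i <;> simp [plotkinEquiv, monomialWord, Fin.prod_univ_succ]

theorem plotkinEquiv_monomialWord_cons_succ {m : ℕ} (a : ℕ) (t : Fin m → ℕ) :
    plotkinEquiv (bitEquiv m) (monomialWord (Fin.cons (a + 1) t)) = (0, monomialWord t) := by
  ext i <;> simp [plotkinEquiv, monomialWord, Fin.prod_univ_succ]

theorem lowDegreeCode_succ_succ (m k : ℕ) : lowDegreeCode (m + 1) (k + 1) =
    plotkin (bitEquiv m) (lowDegreeCode m (k + 1)) (lowDegreeCode m k) := by
  have hgen : plotkinEquiv (F := ZMod 2) (bitEquiv m) '' (monomialWord '' {s | ∑ j, s j < k + 1}) =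
      LinearMap.inl (ZMod 2) _ _ '' (monomialWord '' {t | ∑ j, t j < k + 1}) ∪
        LinearMap.inr (ZMod 2) _ _ '' (monomialWord '' {t | ∑ j, t j < k}) := by
    refine Set.Subset.antisymm ?_ (Set.union_subset ?_ ?_)
    · rintro _ ⟨_, ⟨s, hs, rfl⟩, rfl⟩
      obtain ⟨a, t, rfl⟩ : ∃ a t, s = Fin.cons a t := ⟨_, _, (Fin.cons_self_tail s).symm⟩
      rw [Set.mem_ofPred_eq, Fin.sum_cons] at hs
      obtain _ | a := a
      · exact .inl ⟨_, ⟨t, by simpa using hs, rfl⟩, (plotkinEquiv_monomialWord_cons_zero t).symm⟩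
      · exact .inr ⟨_, ⟨t, by simp only [Set.mem_ofPred_eq]; omega, rfl⟩,
          (plotkinEquiv_monomialWord_cons_succ a t).symm⟩
    · rintro _ ⟨_, ⟨t, ht, rfl⟩, rfl⟩
      exact ⟨_, ⟨Fin.cons 0 t, by simpa [Fin.sum_cons] using ht, rfl⟩,
        plotkinEquiv_monomialWord_cons_zero t⟩
    · rintro _ ⟨_, ⟨t, ht, rfl⟩, rfl⟩
      exact ⟨_, ⟨Fin.cons 1 t, by simpa [Fin.sum_cons, add_comm] using ht, rfl⟩,
        plotkinEquiv_monomialWord_cons_succ 0 t⟩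
  rw [plotkin, lowDegreeCode, lowDegreeCode, lowDegreeCode, ← LinearMap.span_inl_union_inr, ← hgen,
    ← LinearEquiv.coe_toLinearMap, ← Submodule.map_span, Submodule.comap_map_eq_of_injective]
  exact (plotkinEquiv _).injective

end LowDegreeCode

section Shortening

/-- An initial or a final segment of `s` coordinates: the past or the future of a trellis. -/
def IsEndSegment (m s : ℕ) (J : Set (Fin (2 ^ m))) : Prop :=
  J = {i | i.val < s} ∨ J = {i | 2 ^ m ≤ i.val + s}

@[simp]
theorem shortDim_bot {F : Type} [Field F] {n : ℕ} (J : Set (Fin n)) :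
    shortDim (⊥ : Submodule F (Fin n → F)) J = 0 := by
  rw [shortDim, bot_inf_eq, finrank_bot]

theorem shortDim_lowDegreeCode_le (m k : ℕ) (J : Set (Fin (2 ^ m))) :
    shortDim (lowDegreeCode m k) J ≤ heavyCount (m + 1 - k) J.ncard := by
  induction m generalizing k with
  | zero =>
    obtain _ | k := k
    · simp
    · obtain rfl | hJ := J.eq_empty_or_nonempty
      · simp
      · have hJ' : J = Set.univ := Subsingleton.eq_univ_of_nonempty (α := Fin 1) hJ
        simp [hJ', lowDegreeCode_zero_succ]
  | succ m ih =>
    obtain _ | k := k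
    · simp
    have hle (e : Fin (2 ^ m) ⊕ Fin (2 ^ m) ≃ Fin (2 ^ (m + 1)))
        (he : lowDegreeCode (m + 1) (k + 1) =
          plotkin e (lowDegreeCode m (k + 1)) (lowDegreeCode m k))
        (h : (leftHalf e J).ncard ≤ (rightHalf e J).ncard) :
        shortDim (lowDegreeCode (m + 1) (k + 1)) J ≤ heavyCount (m + 1 - k) J.ncard := by
      calc shortDim (lowDegreeCode (m + 1) (k + 1)) J
          ≤ shortDim (lowDegreeCode m (k + 1)) (leftHalf e J) +
            shortDim (lowDegreeCode m k) (rightHalf e J) := he ▸ shortDim_plotkin_le ..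
        _ ≤ heavyCount (m + 1 - k - 1) (leftHalf e J).ncard +
            heavyCount (m + 1 - k) (rightHalf e J).ncard := add_le_add (ih (k + 1) _) (ih k _)
        _ ≤ heavyCount (m + 1 - k) J.ncard := by
            rw [← ncard_leftHalf_add_ncard_rightHalf e, add_comm, add_comm (leftHalf e J).ncard]
            exact heavyCount_add_heavyCount_pred_le h
    rw [Nat.add_sub_add_right]
    rcases le_total (leftHalf (bitEquiv m) J).ncard (rightHalf (bitEquiv m) J).ncard with h | h
    · exact hle _ (lowDegreeCode_succ_succ m k) h
    · exact hle _ ((lowDegreeCode_succ_succ m k).trans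
        (plotkin_sumComm _ (lowDegreeCode_mono m k.le_succ)).symm) h

theorem IsEndSegment.halves {m s : ℕ} {J : Set (Fin (2 ^ (m + 1)))} (h : IsEndSegment (m + 1) s J) :
    ∃ e, (e = bitEquiv m ∨ e = (Equiv.sumComm _ _).trans (bitEquiv m)) ∧
      leftHalf e J ⊆ rightHalf e J ∧
      IsEndSegment m (s / 2) (leftHalf e J) ∧ IsEndSegment m ((s + 1) / 2) (rightHalf e J) := by
  obtain rfl | rfl := h
  · refine ⟨_, .inr rfl, fun i hi => ?_, .inl (Set.ext fun i => ?_), .inl (Set.ext fun i => ?_)⟩ <;>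
      simp only [leftHalf, rightHalf, Equiv.trans_apply, Equiv.sumComm_apply, Sum.swap_inl,
        Sum.swap_inr, Set.mem_ofPred_eq, bitEquiv_inl_val, bitEquiv_inr_val] at * <;> omega
  · refine ⟨_, .inl rfl, fun i hi => ?_, .inr (Set.ext fun i => ?_), .inr (Set.ext fun i => ?_)⟩ <;>
      simp only [leftHalf, rightHalf, Set.mem_ofPred_eq, bitEquiv_inl_val, bitEquiv_inr_val,
        pow_succ] at * <;> omega

theorem IsEndSegment.heavyCount_le_shortDim {m s : ℕ} {J : Set (Fin (2 ^ m))}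
    (hJ : IsEndSegment m s J) (hs : s ≤ 2 ^ m) (k : ℕ) :
    heavyCount (m + 1 - k) s ≤ shortDim (lowDegreeCode m k) J := by
  induction m generalizing k s with
  | zero =>
    obtain _ | k := k
    · simp [heavyCount_eq_zero_of_lt_two_pow (hs.trans_lt (Nat.pow_lt_pow_succ Nat.one_lt_two))]
    · obtain rfl | rfl := Nat.le_one_iff_eq_zero_or_eq_one.1 hs
      · simp
      · have hJ : J = Set.univ := by
          obtain rfl | rfl := hJ <;> ext i <;> simp
        simp [hJ, lowDegreeCode_zero_succ]
  | succ m ih =>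
    obtain _ | k := k
    · simp [heavyCount_eq_zero_of_lt_two_pow (hs.trans_lt (Nat.pow_lt_pow_succ Nat.one_lt_two))]
    obtain ⟨e, he, hsub, hl, hr⟩ := hJ.halves
    have hplotkin : plotkin e (lowDegreeCode m (k + 1)) (lowDegreeCode m k) =
        lowDegreeCode (m + 1) (k + 1) := by
      obtain rfl | rfl := he
      · exact (lowDegreeCode_succ_succ m k).symm
      · rw [plotkin_sumComm _ (lowDegreeCode_mono m k.le_succ), lowDegreeCode_succ_succ]
    calc heavyCount (m + 1 + 1 - (k + 1)) s
        = heavyCount (m + 1 - (k + 1)) (s / 2) + heavyCount (m + 1 - k) ((s + 1) / 2) := by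
          rw [heavyCount_eq_add_halves, add_comm, Nat.add_sub_add_right]
          rfl
      _ ≤ shortDim (lowDegreeCode m (k + 1)) (leftHalf e J) +
            shortDim (lowDegreeCode m k) (rightHalf e J) :=
          add_le_add (ih hl (by omega) (k + 1)) (ih hr (by omega) k)
      _ ≤ shortDim (lowDegreeCode (m + 1) (k + 1)) J :=
          hplotkin ▸ le_shortDim_plotkin e _ _ hsub

theorem IsEndSegment.heavyCount_le_shortDim_RMcode {m s : ℕ} {J : Set (Fin (2 ^ m))}
    (hJ : IsEndSegment m s J) (hs : s ≤ 2 ^ m) (r : ℕ) :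
    heavyCount (m - r) s ≤ shortDim (RMcode r m) J := by
  rw [RMcode_eq_lowDegreeCode, ← Nat.add_sub_add_right m 1 r]
  exact hJ.heavyCount_le_shortDim hs (r + 1)

theorem shortDim_RMcode_le (r m : ℕ) (J : Set (Fin (2 ^ m))) :
    shortDim (RMcode r m) J ≤ heavyCount (m - r) J.ncard := by
  rw [RMcode_eq_lowDegreeCode, ← Nat.add_sub_add_right m 1 r]
  exact shortDim_lowDegreeCode_le m (r + 1) J

theorem finrank_RMcode (r m : ℕ) : finrank (ZMod 2) (RMcode r m) = heavyCount (m - r) (2 ^ m) := by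
  have huniv : IsEndSegment m (2 ^ m) Set.univ := .inl (by ext i; simp)
  rw [← shortDim_univ]
  refine le_antisymm ?_ (huniv.heavyCount_le_shortDim_RMcode le_rfl r)
  simpa [Set.ncard_univ] using shortDim_RMcode_le r m Set.univ

end Shortening

theorem trellisWidth_RMcode_le (r m : ℕ) : trellisWidth (RMcode r m) ≤ tauRM r m := by
  calc trellisWidth (RMcode r m)
      ≤ _ := Nat.sInf_le ⟨Equiv.refl _, rfl⟩
    _ ≤ tauRM r m := Finset.sup_le fun i _ => ?_
  simp only [Equiv.coe_refl, Set.image_id]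
  have hpast : heavyCount (m - r) i ≤ shortDim (RMcode r m) {j | j < i} :=
    IsEndSegment.heavyCount_le_shortDim_RMcode (.inl rfl) i.isLt.le r
  have hfuture : heavyCount (m - r) (2 ^ m - 1 - i) ≤ shortDim (RMcode r m) {j | i < j} := by
    refine IsEndSegment.heavyCount_le_shortDim_RMcode (.inr ?_) (by omega) r
    ext j
    simp only [Set.mem_ofPred_eq, Fin.lt_def]
    omega
  have hdim : finrank (ZMod 2) (RMcode r m) ≤
      tauRM r m + heavyCount (m - r) i + heavyCount (m - r) (2 ^ m - 1 - i) :=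
    finrank_RMcode r m ▸ heavyCount_two_pow_le_tauRM_add (by omega)
  omega

theorem tauRM_le_treeWidth (r m : ℕ) : tauRM r m ≤ treeWidth (RMcode r m) := by
  refine le_treeWidth fun N T ω hT => ?_
  suffices h : ∃ u, tauRM r m +
      ∑ w ∈ nbrFinset T u, heavyCount (m - r) (ω ⁻¹' compAway T u w).ncard ≤
        heavyCount (m - r) (2 ^ m) by
    obtain ⟨u, hu⟩ := h
    have hshort : ∑ w ∈ nbrFinset T u, shortDim (RMcode r m) (ω ⁻¹' compAway T u w) ≤
        ∑ w ∈ nbrFinset T u, heavyCount (m - r) (ω ⁻¹' compAway T u w).ncard :=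
      Finset.sum_le_sum fun w _ => shortDim_RMcode_le r m _
    refine ⟨u, ?_⟩
    rw [kappaNode, finrank_RMcode]
    omega
  rcases le_or_gt m r with hmr | hrm
  · have hsum := sum_ncard_compAway_add_le hT.isAcyclic ω (ω 0)
    have hpos : 0 < (ω ⁻¹' {ω 0}).ncard := (Set.ncard_pos).2 ⟨0, rfl⟩
    refine ⟨ω 0, ?_⟩
    rw [tauRM_eq_one_of_le hmr, Nat.sub_eq_zero_of_le hmr]
    simp only [heavyCount_zero_left]
    omega
  · have := hT.nonempty
    obtain ⟨u, v, hsmall, hv⟩ := exists_balanced_vertex hT.isAcyclic ω (2 ^ m / 3)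
    exact ⟨u, tauRM_add_sum_heavyCount_le hrm hsmall hv
      (Nat.le_of_add_right_le (sum_ncard_compAway_add_le hT.isAcyclic ω u))⟩

/-- the treewidth of `RM(r,m)` equals its trelliswidth, and both equal
the stated binomial-sum expression. -/
theorem stmt8 (r m : ℕ) (hrm : r ≤ m) :
    treeWidth (RMcode r m) = trellisWidth (RMcode r m) ∧
    trellisWidth (RMcode r m) = tauRM r m := by
  have htrellis := trellisWidth_RMcode_le r m
  have htree := tauRM_le_treeWidth r m
  have hle := treeWidth_le_trellisWidth (Nat.two_pow_pos m) (RMcode r m)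
  omega
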